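/- arXiv:1805.09757 — 2 statements merged into one kernel-verified Lean document; each statement's English description precedes it below -/
import Mathlib

section
/- (Theorem 1, part 1) In a hidden Markov tree, for every node n and every label y_n ∈ {0,1}, the unnormalized quantity P′(y_n) := f_n^i(y_n) · g_n^i(y_n) · P(x_n|y_n) equals the joint probability P(X, y_n) of all feature likelihood factors together with the label y_n, i.e. P′(y_n) = Σ over all labelings of the other nodes of [∏_{m=1}^N P(x_m|y_m)] · [∏_{m=1}^N P(y_m | y_{k∈P_m})]. -/
/-!
The sum over labelings is written as `2 ^ N` times the uniform average over `Fin N → Fin 2`, so that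
functions depending on disjoint sets of nodes are independent (`avg_mul`, `avg_prod`).
Since `tree c` is the disjoint union of `{c}` and the trees of the parents of `c`, the brute-force
upstream weight `treeWeight` of a node satisfies the recursion of the messages `f^o`
(`treeWeight_rec`), hence equals `f^o`.

For the messages `g`, fix `n` and `y` and replace the feature likelihood at `n` by its product with
the indicator of the label `y`. This turns the sum over labelings with `y_n = y` into the total
weight `∑ z, F root z` of the modified tree, `F` being the modified upstream weight. The recursion
of `g^i` is adjoint to that of `f^o` (`sum_message_step`): along the path from `n` to the root, the
trees hanging off the path do not contain `n` and keep their weights `f^o`, so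
`∑ z, F m z * g^i m z` is the same for all `m` on the path. At the root it is the joint
probability, and at `n` it is `f^o n y * g^i n y`.
-/

open Finset

/-- A finite reverse tree: every node has at most one child (`child n = none` only
for the unique root), and the parent relation (`child k = some n` meaning `k` is a
parent of `n`) is acyclic. -/
structure RevTree (N : ℕ) where
  child : Fin N → Option (Fin N)
  acyclic : ∀ n : Fin N, ¬ Relation.TransGen (fun a b => child a = some b) n n
  root : Fin N
  child_root : child root = none
  root_unique : ∀ n : Fin N, child n = none → n = root

namespace RevTree

variable {N : ℕ}

/-- The set of parents of a node. -/
def parents (T : RevTree N) (n : Fin N) : Finset (Fin N) :=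
  Finset.univ.filter fun k => T.child k = some n

/-- A leaf is a node with no parents. -/
def IsLeaf (T : RevTree N) (n : Fin N) : Prop :=
  T.parents n = ∅

instance (T : RevTree N) (n : Fin N) : Decidable (T.IsLeaf n) :=
  inferInstanceAs (Decidable (T.parents n = ∅))

open scoped Classical in
/-- `tree n`: all nodes from which `n` is reachable by following child edges,
including `n` itself. -/
noncomputable def tree (T : RevTree N) (n : Fin N) : Finset (Fin N) :=
  Finset.univ.filter fun m =>
    Relation.ReflTransGen (fun a b => T.child a = some b) m n

/-- `subtree n = tree n \ {n}`: the strict descendants (in the parent direction). -/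
noncomputable def subtree (T : RevTree N) (n : Fin N) : Finset (Fin N) :=
  T.tree n \ {n}

/-- `pre n`: complement of `tree n`. -/
noncomputable def pre (T : RevTree N) (n : Fin N) : Finset (Fin N) :=
  Finset.univ \ T.tree n

/-- `passed n`: complement of `subtree n`. -/
noncomputable def passed (T : RevTree N) (n : Fin N) : Finset (Fin N) :=
  Finset.univ \ T.subtree n

/-- The siblings of `n` with respect to its child `c`: the other parents of `c`. -/
def siblings (T : RevTree N) (n c : Fin N) : Finset (Fin N) :=
  T.parents c \ {n}

end RevTree

/-- Leaf class prior `P(y) = π^y (1-π)^(1-y)`. -/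
noncomputable def leafPrior (π : ℝ) (y : Fin 2) : ℝ :=
  π ^ (y : ℕ) * (1 - π) ^ (1 - (y : ℕ))

/-- Class transition probability of a node with label `y` given the product `z`
of its parents' labels: `ρ^(yz) (1-ρ)^((1-y)z) 0^(y(1-z)) 1^((1-y)(1-z))`
(note `(0:ℝ)^0 = 1`). -/
noncomputable def transProb (ρ : ℝ) (y z : ℕ) : ℝ :=
  ρ ^ (y * z) * (1 - ρ) ^ ((1 - y) * z) * (0 : ℝ) ^ (y * (1 - z)) *
    (1 : ℝ) ^ ((1 - y) * (1 - z))

/-- The class factor of node `n` in a full labeling `Y`: the leaf prior for leaves,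
and the transition probability given the product of the parents' labels otherwise. -/
noncomputable def nodeFactor {N : ℕ} (T : RevTree N) (π ρ : ℝ) (Y : Fin N → Fin 2)
    (n : Fin N) : ℝ :=
  if T.IsLeaf n then leafPrior π (Y n)
  else transProb ρ (Y n : ℕ) (∏ k ∈ T.parents n, (Y k : ℕ))

/-- The marginal `P(x_S, y_T)`: sum over all labelings agreeing with `σ` on `Tset`
of the product of the feature likelihoods over `S` times the product of all class
factors. -/
noncomputable def marginal {N : ℕ} (T : RevTree N) (π ρ : ℝ) (px : Fin N → Fin 2 → ℝ)
    (S Tset : Finset (Fin N)) (σ : Fin N → Fin 2) : ℝ :=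
  ∑ Y ∈ Finset.univ.filter (fun Y : Fin N → Fin 2 => ∀ t ∈ Tset, Y t = σ t),
    (∏ m ∈ S, px m (Y m)) * ∏ m, nodeFactor T π ρ Y m

/-- Assignments of binary labels to the nodes in `S` (encoded as functions on all
nodes that are `0` outside `S`, so each assignment to `S` occurs exactly once). -/
def assignments {N : ℕ} (S : Finset (Fin N)) : Finset (Fin N → Fin 2) :=
  Finset.univ.filter fun u => ∀ k ∉ S, u k = 0

namespace HMT

variable {N : ℕ}

/-! ### Reachability in a reverse tree -/

/-- `Step T a b`: `b` is the child of `a`. -/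
abbrev Step (T : RevTree N) (a b : Fin N) : Prop := T.child a = some b

lemma mem_tree {T : RevTree N} {m n : Fin N} :
    m ∈ T.tree n ↔ Relation.ReflTransGen (Step T) m n := by
  simp [RevTree.tree]

lemma mem_parents {T : RevTree N} {k n : Fin N} : k ∈ T.parents n ↔ T.child k = some n := by
  simp [RevTree.parents]

lemma self_mem_tree (T : RevTree N) (n : Fin N) : n ∈ T.tree n :=
  mem_tree.2 .refl

lemma wf_trans (T : RevTree N) : WellFounded (Relation.TransGen (Step T)) := by
  have : Std.Irrefl (Relation.TransGen (Step T)) := ⟨T.acyclic⟩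
  exact Finite.wellFounded_of_trans_of_irrefl _

lemma wf_trans_swap (T : RevTree N) :
    WellFounded (fun a b => Relation.TransGen (Step T) b a) := by
  have : Std.Irrefl (fun a b => Relation.TransGen (Step T) b a) := ⟨T.acyclic⟩
  have : IsTrans (Fin N) (fun a b => Relation.TransGen (Step T) b a) :=
    ⟨fun _ _ _ h h' => h'.trans h⟩
  exact Finite.wellFounded_of_trans_of_irrefl _

lemma reach_root (T : RevTree N) (m : Fin N) : Relation.ReflTransGen (Step T) m T.root := by
  induction m using (wf_trans_swap T).induction with
  | _ m ih =>
    cases h : T.child m with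
    | none => rw [T.root_unique m h]
    | some c => exact .head h (ih c (.single h))

lemma tree_root (T : RevTree N) : T.tree T.root = univ := by
  ext m
  simpa using mem_tree.2 (reach_root T m)

/-- A path leaving `a` must pass through the child of `a`. -/
lemma reach_child {T : RevTree N} {a b c : Fin N} (h : Relation.TransGen (Step T) a b)
    (hc : T.child a = some c) : Relation.ReflTransGen (Step T) c b := by
  obtain ⟨d, had, hdb⟩ := Relation.TransGen.head'_iff.1 h
  have : c = d := by
    have := hc.symm.trans had
    simpa using this
  exact this ▸ hdb

lemma not_reach_of_child {T : RevTree N} {k c : Fin N} (hk : T.child k = some c) :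
    ¬ Relation.ReflTransGen (Step T) c k := fun h =>
  T.acyclic k (Relation.TransGen.head' hk h)

/-- Paths are unique since each node has at most one child; a node upstream of two parents of `c`
would put one parent upstream of the other and close a cycle through `c`. -/
lemma tree_disjoint {T : RevTree N} {k l c : Fin N} (hk : T.child k = some c)
    (hl : T.child l = some c) (hkl : k ≠ l) : Disjoint (T.tree k) (T.tree l) := by
  have key : ∀ {a b : Fin N}, T.child a = some c → T.child b = some c → a ≠ b →
      ¬ Relation.ReflTransGen (Step T) a b := by
    intro a b ha hb hab h
    rcases Relation.reflTransGen_iff_eq_or_transGen.1 h with h | h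
    · exact hab h.symm
    · exact not_reach_of_child hb (reach_child h ha)
  rw [Finset.disjoint_left]
  intro m hmk hml
  rcases Relation.ReflTransGen.total_of_right_unique
    (fun a b d (h1 : T.child a = some b) (h2 : T.child a = some d) => by
      simpa using h1.symm.trans h2)
    (mem_tree.1 hmk) (mem_tree.1 hml) with h | h
  · exact key hk hl hkl h
  · exact key hl hk hkl.symm h

lemma tree_eq (T : RevTree N) (c : Fin N) :
    T.tree c = insert c ((T.parents c).biUnion T.tree) := by
  ext m
  simp only [mem_insert, mem_biUnion, mem_tree, mem_parents]
  constructor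
  · intro h
    rcases Relation.ReflTransGen.cases_tail h with h | ⟨k, h, hk⟩
    · exact .inl h.symm
    · exact .inr ⟨k, hk, h⟩
  · rintro (rfl | ⟨k, hk, h⟩)
    · exact .refl
    · exact h.tail hk

lemma not_mem_biUnion (T : RevTree N) (c : Fin N) : c ∉ (T.parents c).biUnion T.tree := by
  simp only [mem_biUnion, mem_tree, mem_parents, not_exists, not_and]
  exact fun k hk => not_reach_of_child hk

lemma pairwiseDisjoint_tree (T : RevTree N) (c : Fin N) :
    ((T.parents c : Set (Fin N))).PairwiseDisjoint T.tree := fun _ hk _ hl hkl =>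
  tree_disjoint (mem_parents.1 hk) (mem_parents.1 hl) hkl

lemma parent_mem_tree {T : RevTree N} {j m k : Fin N} (hj : j ∈ T.parents m)
    (hm : m ∈ T.tree k) : j ∈ T.tree k :=
  mem_tree.2 (.head (mem_parents.1 hj) (mem_tree.1 hm))

/-! ### Uniform averages over labelings -/

/-- The average of `f` over all labelings, uniformly weighted. -/
noncomputable def avg (f : (Fin N → Fin 2) → ℝ) : ℝ := (∑ Y, f Y) / 2 ^ N

lemma avg_const (a : ℝ) : avg (fun _ : Fin N → Fin 2 => a) = a := by
  simp [avg]

lemma avg_sum {ι : Type*} (s : Finset ι) (f : ι → (Fin N → Fin 2) → ℝ) :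
    avg (fun Y => ∑ i ∈ s, f i Y) = ∑ i ∈ s, avg (f i) := by
  simp only [avg]
  rw [Finset.sum_comm, Finset.sum_div]

lemma avg_const_mul (a : ℝ) (f : (Fin N → Fin 2) → ℝ) :
    avg (fun Y => a * f Y) = a * avg f := by
  simp only [avg, ← Finset.mul_sum, mul_div_assoc]

/-- Independence of functions of disjoint sets of coordinates. -/
lemma avg_mul {f g : (Fin N → Fin 2) → ℝ} {S U : Finset (Fin N)} (hf : DependsOn f (S : Set (Fin N)))
    (hg : DependsOn g (U : Set (Fin N))) (hSU : Disjoint S U) :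
    avg (fun Y => f Y * g Y) = avg f * avg g := by
  -- Exchanging the coordinates outside `S` of two labelings is an involution on pairs.
  let e : (Fin N → Fin 2) × (Fin N → Fin 2) → (Fin N → Fin 2) × (Fin N → Fin 2) :=
    fun p => (S.piecewise p.1 p.2, S.piecewise p.2 p.1)
  have he : Function.Involutive e := by
    rintro ⟨a, b⟩
    ext i <;> by_cases hi : i ∈ S <;> simp [e, hi]
  have key : ∑ p : (Fin N → Fin 2) × (Fin N → Fin 2), f p.1 * g p.2
      = ∑ p : (Fin N → Fin 2) × (Fin N → Fin 2), f p.1 * g p.1 := by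
    refine Fintype.sum_equiv he.toPerm _ _ fun p => ?_
    have h1 : f (e p).1 = f p.1 := hf fun i hi => by
      have : i ∈ S := hi
      simp [e, this]
    have h2 : g (e p).1 = g p.2 := hg fun i hi => by
      have : i ∉ S := Finset.disjoint_right.1 hSU hi
      simp [e, this]
    simp only [Function.Involutive.coe_toPerm, h1, h2]
  rw [Fintype.sum_prod_type, Fintype.sum_prod_type] at key
  simp only [Finset.sum_const, Finset.card_univ, Fintype.card_fun, Fintype.card_fin, nsmul_eq_mul,
    ← Finset.mul_sum, ← Finset.sum_mul] at key
  push_cast at key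
  simp only [avg]
  field_simp
  linarith

lemma dependsOn_prod {ι : Type*} (P : Finset ι) (S : ι → Finset (Fin N))
    (f : ι → (Fin N → Fin 2) → ℝ)
    (hf : ∀ k ∈ P, DependsOn (f k) (S k : Set (Fin N))) :
    DependsOn (fun Y => ∏ k ∈ P, f k Y) (P.biUnion S : Set (Fin N)) := by
  intro x y h
  refine Finset.prod_congr rfl fun k hk => hf k hk fun i hi => h i ?_
  simp only [coe_biUnion, Set.mem_iUnion]
  exact ⟨k, hk, hi⟩

lemma avg_prod (P : Finset (Fin N)) (S : Fin N → Finset (Fin N))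
    (f : Fin N → (Fin N → Fin 2) → ℝ)
    (hf : ∀ k ∈ P, DependsOn (f k) (S k : Set (Fin N)))
    (hS : (P : Set (Fin N)).PairwiseDisjoint S) :
    avg (fun Y => ∏ k ∈ P, f k Y) = ∏ k ∈ P, avg (f k) := by
  induction P using Finset.induction_on with
  | empty => simp [avg_const]
  | insert a P ha ih =>
    simp only [Finset.prod_insert ha]
    rw [avg_mul (hf a (mem_insert_self _ _))
      (dependsOn_prod P S f fun k hk => hf k (mem_insert_of_mem hk)),
      ih (fun k hk => hf k (mem_insert_of_mem hk))
        (hS.subset (by simp))]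
    rw [Finset.disjoint_biUnion_right]
    intro k hk
    exact hS (by simp) (by simp [hk]) (by rintro rfl; exact ha hk)

lemma avg_indicator (c : Fin N) (y : Fin 2) :
    avg (fun Y : Fin N → Fin 2 => if Y c = y then (2 : ℝ) else 0) = 1 := by
  -- Flipping the label of `c` shows that the two possible labels have the same average.
  have hsymm : ∀ z : Fin 2, avg (fun Y : Fin N → Fin 2 => if Y c = z then (2 : ℝ) else 0)
      = avg (fun Y : Fin N → Fin 2 => if Y c = z + 1 then (2 : ℝ) else 0) := by
    intro z
    simp only [avg]
    congr 1
    refine Fintype.sum_equiv (Equiv.addRight (Pi.single c (1 : Fin 2))) _ _ fun Y => ?_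
    simp
  have htot : ∑ z : Fin 2, avg (fun Y : Fin N → Fin 2 => if Y c = z then (2 : ℝ) else 0) = 2 := by
    rw [← avg_sum]
    simp [avg_const]
  have h0 := hsymm 0
  simp only [Fin.sum_univ_two] at htot
  rw [zero_add] at h0
  fin_cases y
  · change avg (fun Y : Fin N → Fin 2 => if Y c = 0 then (2 : ℝ) else 0) = 1
    linarith
  · change avg (fun Y : Fin N → Fin 2 => if Y c = 1 then (2 : ℝ) else 0) = 1
    linarith

/-! ### The upstream weight of a node -/

/-- Product of all factors of the nodes of `tree c`. The factor `2` per node compensates for the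
normalization of `avg`. -/
noncomputable def treeProd (T : RevTree N) (π ρ : ℝ) (px : Fin N → Fin 2 → ℝ) (c : Fin N)
    (Y : Fin N → Fin 2) : ℝ :=
  ∏ m ∈ T.tree c, (2 * px m (Y m) * nodeFactor T π ρ Y m)

/-- The total weight of the labelings of `tree c` giving `c` the label `y`. -/
noncomputable def treeWeight (T : RevTree N) (π ρ : ℝ) (px : Fin N → Fin 2 → ℝ) (c : Fin N)
    (y : Fin 2) : ℝ :=
  avg fun Y => if Y c = y then treeProd T π ρ px c Y else 0

/-- The class factor of `c` for the label `y` of `c` and labels `u` of its parents. -/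
noncomputable def localFactor (T : RevTree N) (π ρ : ℝ) (c : Fin N) (y : Fin 2)
    (u : Fin N → Fin 2) : ℝ :=
  if T.IsLeaf c then leafPrior π y
  else transProb ρ (y : ℕ) (∏ k ∈ T.parents c, (u k : ℕ))

lemma nodeFactor_congr (T : RevTree N) (π ρ : ℝ) {m : Fin N} {Y Z : Fin N → Fin 2}
    (h : Y m = Z m) (hp : ∀ k ∈ T.parents m, Y k = Z k) :
    nodeFactor T π ρ Y m = nodeFactor T π ρ Z m := by
  simp only [nodeFactor, h]
  rw [Finset.prod_congr rfl fun k hk => by rw [hp k hk]]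

lemma dependsOn_indicator_treeProd (T : RevTree N) (π ρ : ℝ) (px : Fin N → Fin 2 → ℝ) (c : Fin N)
    (y : Fin 2) :
    DependsOn (fun Y : Fin N → Fin 2 => if Y c = y then treeProd T π ρ px c Y else 0)
      (T.tree c : Set (Fin N)) := by
  intro Y Z h
  have hprod : treeProd T π ρ px c Y = treeProd T π ρ px c Z :=
    Finset.prod_congr rfl fun m hm => by
      rw [h m hm, nodeFactor_congr T π ρ (h m hm) fun k hk => h k (parent_mem_tree hk hm)]
  simp only [hprod, h c (self_mem_tree T c)]

lemma treeProd_rec (T : RevTree N) (π ρ : ℝ) (px : Fin N → Fin 2 → ℝ) (c : Fin N)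
    (Y : Fin N → Fin 2) :
    treeProd T π ρ px c Y = (2 * px c (Y c) * localFactor T π ρ c (Y c) Y) *
      ∏ k ∈ T.parents c, treeProd T π ρ px k Y := by
  unfold treeProd
  rw [tree_eq T c, Finset.prod_insert (not_mem_biUnion T c),
    Finset.prod_biUnion (pairwiseDisjoint_tree T c)]
  rfl

/-- The integrand of `treeWeight`, split according to the labels of the parents of `c`. -/
lemma indicator_treeProd_eq (T : RevTree N) (π ρ : ℝ) (px : Fin N → Fin 2 → ℝ) (c : Fin N)
    (y : Fin 2) (Y : Fin N → Fin 2) :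
    (if Y c = y then treeProd T π ρ px c Y else 0) =
      ∑ u ∈ assignments (T.parents c), (px c y * localFactor T π ρ c y u) *
        ((if Y c = y then 2 else 0) *
          ∏ k ∈ T.parents c, if Y k = u k then treeProd T π ρ px k Y else 0) := by
  -- Only the restriction of `Y` to the parents contributes.
  rw [Finset.sum_eq_single ((T.parents c).piecewise Y 0)]
  · by_cases hy : Y c = y
    · subst hy
      have h1 : localFactor T π ρ c (Y c) ((T.parents c).piecewise Y 0)
          = localFactor T π ρ c (Y c) Y := by
        unfold localFactor
        rw [Finset.prod_congr rfl fun k hk => by rw [Finset.piecewise_eq_of_mem _ _ _ hk]]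
      have h2 : (∏ k ∈ T.parents c,
          if Y k = (T.parents c).piecewise Y 0 k then treeProd T π ρ px k Y else 0)
          = ∏ k ∈ T.parents c, treeProd T π ρ px k Y :=
        Finset.prod_congr rfl fun k hk => by simp [hk]
      rw [h1, h2, treeProd_rec]
      simp only [if_true]
      ring
    · simp [hy]
  · intro u hu hne
    have : ∃ k ∈ T.parents c, Y k ≠ u k := by
      by_contra! hcon
      apply hne
      funext k
      by_cases hk : k ∈ T.parents c
      · simp [hk, hcon k hk]
      · simpa [hk] using (mem_filter.1 hu).2 k hk
    obtain ⟨k, hk, hYk⟩ := this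
    rw [Finset.prod_eq_zero hk (by simp [hYk])]
    simp
  · intro h
    exact absurd (mem_filter.2 ⟨mem_univ _, fun k hk => by simp [hk]⟩) h

/-- The upstream weights satisfy the recursion defining the messages `f^o`. -/
lemma treeWeight_rec (T : RevTree N) (π ρ : ℝ) (px : Fin N → Fin 2 → ℝ) (c : Fin N) (y : Fin 2) :
    treeWeight T π ρ px c y = px c y * ∑ u ∈ assignments (T.parents c),
      localFactor T π ρ c y u * ∏ k ∈ T.parents c, treeWeight T π ρ px k (u k) := by
  have hc : DependsOn (fun Y : Fin N → Fin 2 => if Y c = y then (2 : ℝ) else 0)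
      (({c} : Finset (Fin N)) : Set (Fin N)) := by
    intro Y Z h
    simp only [h c (by simp)]
  have hdis : Disjoint ({c} : Finset (Fin N)) ((T.parents c).biUnion T.tree) :=
    Finset.disjoint_singleton_left.2 (not_mem_biUnion T c)
  conv_lhs => unfold treeWeight
  simp_rw [indicator_treeProd_eq T π ρ px c y]
  rw [avg_sum, Finset.mul_sum]
  refine Finset.sum_congr rfl fun u _ => ?_
  rw [avg_const_mul,
    avg_mul hc (dependsOn_prod (T.parents c) T.tree _ fun k _ =>
      dependsOn_indicator_treeProd T π ρ px k (u k)) hdis,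
    avg_indicator,
    avg_prod (T.parents c) T.tree _ (fun k _ => dependsOn_indicator_treeProd T π ρ px k (u k))
      (pairwiseDisjoint_tree T c)]
  simp only [treeWeight]
  ring

lemma treeWeight_congr (T : RevTree N) (π ρ : ℝ) {px px' : Fin N → Fin 2 → ℝ} (c : Fin N)
    (h : ∀ m ∈ T.tree c, px m = px' m) (y : Fin 2) :
    treeWeight T π ρ px c y = treeWeight T π ρ px' c y := by
  have : treeProd T π ρ px c = treeProd T π ρ px' c := by
    funext Y
    exact Finset.prod_congr rfl fun m hm => by rw [h m hm]
  simp only [treeWeight, this]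

lemma sum_treeWeight_root (T : RevTree N) (π ρ : ℝ) (px : Fin N → Fin 2 → ℝ) :
    ∑ y, treeWeight T π ρ px T.root y
      = ∑ Y : Fin N → Fin 2, (∏ m, px m (Y m)) * ∏ m, nodeFactor T π ρ Y m := by
  simp only [treeWeight]
  rw [← avg_sum]
  simp only [Finset.sum_ite_eq, mem_univ, if_true, treeProd, tree_root, avg,
    Finset.prod_mul_distrib, Finset.prod_const, Finset.card_univ, Fintype.card_fin, mul_assoc]
  rw [← Finset.mul_sum]
  field_simp

/-! ### Messages -/

lemma assignments_empty : assignments (∅ : Finset (Fin N)) = {0} := by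
  ext u
  simp [assignments, funext_iff]

/-- Labelings of `insert m S` are pairs of a label of `m` and a labeling of `S`. -/
lemma sum_assignments_insert {S : Finset (Fin N)} {m : Fin N} (hm : m ∉ S)
    (h : (Fin N → Fin 2) → ℝ) :
    ∑ u ∈ assignments (insert m S), h u
      = ∑ y : Fin 2, ∑ v ∈ assignments S, h (Function.update v m y) := by
  rw [← Finset.sum_product']
  symm
  refine Finset.sum_bij' (fun p _ => Function.update p.2 m p.1)
    (fun u _ => (u m, Function.update u m 0)) ?_ ?_ ?_ ?_ ?_
  · rintro ⟨y, v⟩ hp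
    simp only [assignments, mem_product, mem_filter, mem_univ, true_and, mem_insert, not_or]
      at hp ⊢
    rintro k ⟨hk, hkS⟩
    simp [hk, hp k hkS]
  · intro u hu
    simp only [assignments, mem_product, mem_filter, mem_univ, true_and, mem_insert, not_or]
      at hu ⊢
    intro k hk
    by_cases hkm : k = m
    · simp [hkm]
    · simp [hkm, hu k ⟨hkm, hk⟩]
  · rintro ⟨y, v⟩ hp
    simp only [assignments, mem_product, mem_filter, mem_univ, true_and] at hp
    have : Function.update v m 0 = v := by
      rw [← hp m hm, Function.update_eq_self]
    simp [this]
  · intro u _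
    simp
  · intro p _
    rfl

lemma fo_eq_treeWeight (T : RevTree N) (π ρ : ℝ) (px fi fo : Fin N → Fin 2 → ℝ)
    (hfiLeaf : ∀ n, T.IsLeaf n → ∀ y : Fin 2, fi n y = leafPrior π y)
    (hfiInt : ∀ n, ¬ T.IsLeaf n → ∀ y : Fin 2,
      fi n y = ∑ u ∈ assignments (T.parents n),
        transProb ρ (y : ℕ) (∏ k ∈ T.parents n, (u k : ℕ)) *
          ∏ k ∈ T.parents n, fo k (u k))
    (hfo : ∀ n y, fo n y = fi n y * px n y) (n : Fin N) :
    ∀ y, fo n y = treeWeight T π ρ px n y := by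
  induction n using (wf_trans T).induction with
  | _ n ih =>
    intro y
    rw [hfo, treeWeight_rec, mul_comm]
    congr 1
    by_cases hl : T.IsLeaf n
    · have hp : T.parents n = ∅ := hl
      simp [hfiLeaf n hl, hp, assignments_empty, localFactor, hl]
    · rw [hfiInt n hl]
      refine Finset.sum_congr rfl fun u _ => ?_
      simp only [localFactor, hl, if_false]
      rw [Finset.prod_congr rfl fun k hk => ih k (.single (mem_parents.1 hk)) (u k)]

/-- Adjointness of the two recursions along an edge from `m` to its child `c`: if `F` follows the
`f^o` recursion at `c` and agrees with `f^o` at the siblings of `m`, the pairing of `F` with `g^i`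
takes the same value at `m` and at `c`. -/
lemma sum_message_step (T : RevTree N) (ρ : ℝ) {m c : Fin N} (hmc : T.child m = some c)
    (F fo gi go px : Fin N → Fin 2 → ℝ)
    (hF : ∀ y, F c y = px c y * ∑ u ∈ assignments (T.parents c),
      transProb ρ (y : ℕ) (∏ k ∈ T.parents c, (u k : ℕ)) * ∏ k ∈ T.parents c, F k (u k))
    (hsib : ∀ k ∈ T.siblings m c, ∀ y, F k y = fo k y)
    (hgi : ∀ y : Fin 2,
      gi m y = ∑ yc : Fin 2, ∑ u ∈ assignments (T.siblings m c),
        go c yc * transProb ρ (yc : ℕ) ((y : ℕ) * ∏ k ∈ T.siblings m c, (u k : ℕ)) *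
          ∏ k ∈ T.siblings m c, fo k (u k))
    (hgo : ∀ y, go c y = gi c y * px c y) :
    ∑ y, F m y * gi m y = ∑ y, F c y * gi c y := by
  have hm : m ∉ T.siblings m c := by simp [RevTree.siblings]
  have hins : T.parents c = insert m (T.siblings m c) := by
    have := mem_parents.2 hmc
    ext k
    by_cases hk : k = m <;> simp [RevTree.siblings, hk, this]
  simp_rw [hF, hgi, hins, sum_assignments_insert hm, Finset.prod_insert hm, Finset.mul_sum,
    Finset.sum_mul]
  rw [Finset.sum_comm]
  refine Finset.sum_congr rfl fun yc _ => Finset.sum_congr rfl fun y _ =>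
    Finset.sum_congr rfl fun v _ => ?_
  have hne : ∀ k ∈ T.siblings m c, k ≠ m := fun k hk h => hm (h ▸ hk)
  have h1 : ∏ k ∈ T.siblings m c, ((Function.update v m y k : Fin 2) : ℕ)
      = ∏ k ∈ T.siblings m c, (v k : ℕ) :=
    Finset.prod_congr rfl fun k hk => by rw [Function.update_of_ne (hne k hk)]
  have h2 : ∏ k ∈ T.siblings m c, F k (Function.update v m y k)
      = ∏ k ∈ T.siblings m c, fo k (v k) :=
    Finset.prod_congr rfl fun k hk => by rw [Function.update_of_ne (hne k hk), hsib k hk]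
  rw [h1, h2, Function.update_self, hgo]
  ring

/-- The feature likelihoods `px`, with the one at `n` restricted to the label `y`. -/
noncomputable def restrictLik (px : Fin N → Fin 2 → ℝ) (n : Fin N) (y : Fin 2) :
    Fin N → Fin 2 → ℝ :=
  Function.update px n fun z => if z = y then px n z else 0

lemma restrictLik_of_ne (px : Fin N → Fin 2 → ℝ) {n m : Fin N} (h : m ≠ n) (y : Fin 2) :
    restrictLik px n y m = px m := by
  simp [restrictLik, h]

lemma restrictLik_self (px : Fin N → Fin 2 → ℝ) (n : Fin N) (y z : Fin 2) :
    restrictLik px n y n z = if z = y then px n z else 0 := by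
  simp [restrictLik]

lemma treeWeight_restrictLik_self (T : RevTree N) (π ρ : ℝ) (px : Fin N → Fin 2 → ℝ) (n : Fin N)
    (y z : Fin 2) :
    treeWeight T π ρ (restrictLik px n y) n z
      = if z = y then treeWeight T π ρ px n z else 0 := by
  have hpar : ∀ k ∈ T.parents n, ∀ w,
      treeWeight T π ρ (restrictLik px n y) k w = treeWeight T π ρ px k w := fun k hk w =>
    treeWeight_congr T π ρ k (fun m hm => restrictLik_of_ne px (by
      rintro rfl
      exact not_reach_of_child (mem_parents.1 hk) (mem_tree.1 hm)) y) w
  rw [treeWeight_rec, treeWeight_rec T π ρ px, restrictLik_self, ite_mul, zero_mul]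
  congr 2
  refine Finset.sum_congr rfl fun u _ => ?_
  rw [Finset.prod_congr rfl fun k hk => hpar k hk (u k)]

lemma sum_restrictLik (T : RevTree N) (π ρ : ℝ) (px : Fin N → Fin 2 → ℝ) (n : Fin N) (y : Fin 2) :
    ∑ Y : Fin N → Fin 2, (∏ m, restrictLik px n y m (Y m)) * ∏ m, nodeFactor T π ρ Y m
      = marginal T π ρ px univ {n} (fun _ => y) := by
  rw [marginal, Finset.sum_filter]
  refine Finset.sum_congr rfl fun Y _ => ?_
  by_cases h : Y n = y
  · have : ∏ m, restrictLik px n y m (Y m) = ∏ m, px m (Y m) :=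
      Finset.prod_congr rfl fun m _ => by
        by_cases hm : m = n
        · subst hm
          rw [restrictLik_self, if_pos h]
        · rw [restrictLik_of_ne px hm]
    simp [this, h]
  · rw [Finset.prod_eq_zero (mem_univ n) (by rw [restrictLik_self, if_neg h])]
    simp [h]

end HMT

open HMT

/-- Theorem 1, part 1: the unnormalized quantity
`P′(y_n) = f_n^i(y_n) · g_n^i(y_n) · P(x_n|y_n)` equals the joint probability
`P(X, y_n)` (all feature likelihood factors together with the label of `n`). -/
theorem unnormalized_node_marginal_eq_joint
{N : ℕ} (T : RevTree N) (π ρ : ℝ)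
    (hπ : π ∈ Set.Ioo (0 : ℝ) 1) (hρ : ρ ∈ Set.Ioo (0 : ℝ) 1)
    (px : Fin N → Fin 2 → ℝ) (hpx : ∀ n y, 0 ≤ px n y)
(fi fo : Fin N → Fin 2 → ℝ)
    (hfiLeaf : ∀ n, T.IsLeaf n → ∀ y : Fin 2, fi n y = leafPrior π y)
    (hfiInt : ∀ n, ¬ T.IsLeaf n → ∀ y : Fin 2,
      fi n y = ∑ u ∈ assignments (T.parents n),
        transProb ρ (y : ℕ) (∏ k ∈ T.parents n, (u k : ℕ)) *
          ∏ k ∈ T.parents n, fo k (u k))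
    (hfo : ∀ n y, fo n y = fi n y * px n y)
(gi go : Fin N → Fin 2 → ℝ)
    (hgiRoot : ∀ y : Fin 2, gi T.root y = 1)
    (hgiInt : ∀ n c, T.child n = some c → ∀ y : Fin 2,
      gi n y = ∑ yc : Fin 2, ∑ u ∈ assignments (T.siblings n c),
        go c yc * transProb ρ (yc : ℕ) ((y : ℕ) * ∏ k ∈ T.siblings n c, (u k : ℕ)) *
          ∏ k ∈ T.siblings n c, fo k (u k))
    (hgo : ∀ n y, go n y = gi n y * px n y) :
    ∀ (n : Fin N) (y : Fin 2),
      fi n y * gi n y * px n y =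
        marginal T π ρ px Finset.univ {n} (fun _ => y) := by
  intro n y
  have hfoW := fo_eq_treeWeight T π ρ px fi fo hfiLeaf hfiInt hfo
  set F := treeWeight T π ρ (restrictLik px n y) with hFdef
  have hpath : ∀ m, Relation.ReflTransGen (Step T) n m →
      ∑ z, F n z * gi n z = ∑ z, F m z * gi m z := by
    intro m hm
    induction hm with
    | refl => rfl
    | @tail m c hnm hmc =>
      refine Eq.trans ‹_› ?_
      have hcn : c ≠ n := by
        rintro rfl
        exact not_reach_of_child hmc hnm
      have hleaf : ¬ T.IsLeaf c := fun h => by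
        have h' : T.parents c = ∅ := h
        simpa [h'] using mem_parents.2 hmc
      refine sum_message_step T ρ hmc F fo gi go px ?_ ?_ (hgiInt m c hmc) (hgo c)
      · intro z
        rw [hFdef, treeWeight_rec, restrictLik_of_ne px hcn]
        simp only [localFactor, hleaf, if_false]
      · intro k hk z
        simp only [RevTree.siblings, mem_sdiff, mem_singleton, mem_parents] at hk
        rw [hfoW]
        -- `n` lies in `tree m`, which is disjoint from `tree k`.
        refine treeWeight_congr T π ρ k (fun j hj => restrictLik_of_ne px ?_ y) z
        rintro rfl
        exact Finset.disjoint_left.1 (tree_disjoint hk.1 hmc hk.2) hj (mem_tree.2 hnm)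
  have hroot := hpath T.root (reach_root T n)
  simp only [hgiRoot, mul_one] at hroot
  rw [hFdef, sum_treeWeight_root, sum_restrictLik] at hroot
  rw [← hroot]
  simp only [treeWeight_restrictLik_self, ite_mul, zero_mul, Finset.sum_ite_eq', mem_univ,
    if_true, ← hfoW, hfo]
  ring
end

section
/- In a hidden Markov tree, the normalizing constant of the unnormalized node marginal is the data likelihood and is the same for every node: for every node n, Σ_{y_n ∈ {0,1}} f_n^i(y_n) · g_n^i(y_n) · P(x_n|y_n) = P(X), where P(X) := Σ over all full labelings Y of ∏_{m=1}^N P(x_m|y_m) · ∏_{m=1}^N P(y_m | y_{k∈P_m}). -/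
/-! Write `Z n = ∑ y, fi n y * gi n y * px n y`.

*The constant does not depend on the node.* If `c` is the child of `n`, expanding `gi n` in
`Z n` yields a sum over the label of `c`, the label of `n` and the labels of the siblings of `n`.
The last two together run over the labelings of all parents of `c`, and that inner sum is
`fi c`; so `Z n = Z c` (`nodeSum_eq_child`). Following child edges, which terminates by
acyclicity, gives `Z n = Z root = ∑ y, fo root y`.

*At the root it is the data likelihood.* The labels are summed out from the leaves towards the
root. For a parent-closed set `D` of processed nodes, `partialSum` is the sum over all labelings
in which the factors of the nodes in `D` have been replaced by the messages `fo` of those nodes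
of `D` whose child, if any, is outside `D`; the labels of the other nodes of `D`, already summed
out, are pinned to `0`. Adding to `D` a node all of whose parents lie in `D` does not change the
value (`partialSum_insert`): summing out the labels of its parents is exactly the recursion for
`fi`. At `D = ∅` the value is `P(X)`, at `D = univ` it is `∑ y, fo root y`.
-/

open Finset

/-! ### Parents and well-foundedness of the tree -/

namespace RevTree

variable {N : ℕ}

lemma mem_parents (T : RevTree N) {k n : Fin N} : k ∈ T.parents n ↔ T.child k = some n := by
  simp [parents]

lemma not_mem_parents_self (T : RevTree N) (n : Fin N) : n ∉ T.parents n := fun h =>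
  T.acyclic n (Relation.TransGen.single (T.mem_parents.1 h))

/-- Induction from parents to children. -/
lemma wf_parent (T : RevTree N) : WellFounded fun a b => T.child a = some b := by
  have : Std.Irrefl (Relation.TransGen fun a b => T.child a = some b) := ⟨T.acyclic⟩
  have h := Finite.wellFounded_of_trans_of_irrefl (Relation.TransGen fun a b => T.child a = some b)
  exact h.mono fun _ _ hab => Relation.TransGen.single hab

/-- Induction from children to parents, starting at the root. -/
lemma wf_child (T : RevTree N) : WellFounded fun a b => T.child b = some a := by
  have : Std.Irrefl (Relation.TransGen fun a b => T.child b = some a) := ⟨fun n h =>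
    T.acyclic n (Relation.transGen_swap.1 h)⟩
  have h := Finite.wellFounded_of_trans_of_irrefl (Relation.TransGen fun a b => T.child b = some a)
  exact h.mono fun _ _ hab => Relation.TransGen.single hab

end RevTree

/-! ### Sums over partial labelings -/

section

variable {N : ℕ}

lemma mem_assignments {S : Finset (Fin N)} {u : Fin N → Fin 2} :
    u ∈ assignments S ↔ ∀ k ∉ S, u k = 0 := by
  simp [assignments]

/-- A labeling of `P` is a label of `n ∈ P` together with a labeling of `P \ {n}`. -/
lemma sum_assignments_split {P : Finset (Fin N)} {n : Fin N} (hn : n ∈ P)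
    (F : (Fin N → Fin 2) → ℝ) :
    ∑ u ∈ assignments P, F u =
      ∑ y : Fin 2, ∑ u ∈ assignments (P \ {n}), F (Function.update u n y) := by
  rw [← Finset.sum_product']
  refine Finset.sum_nbij' (fun u => (u n, Function.update u n 0))
    (fun p => Function.update p.2 n p.1) ?_ ?_ ?_ ?_ ?_
  · intro u hu
    rw [mem_assignments] at hu
    simp only [Finset.mem_product, Finset.mem_univ, true_and, mem_assignments]
    intro k hk
    by_cases hkn : k = n
    · simp [hkn]
    · rw [Function.update_of_ne hkn]
      exact hu k (by simpa [hkn] using hk)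
  · rintro ⟨y, u⟩ hu
    simp only [Finset.mem_product, Finset.mem_univ, true_and, mem_assignments] at hu ⊢
    intro k hk
    have hkn : k ≠ n := fun h => hk (h ▸ hn)
    rw [Function.update_of_ne hkn]
    exact hu k (by simp [hk])
  · intro u _
    simp
  · rintro ⟨y, u⟩ hu
    simp only [Finset.mem_product, Finset.mem_univ, true_and, mem_assignments] at hu
    have h0 : u n = 0 := hu n (by simp)
    simp [← h0]
  · intro u _
    simp

/-- Summing out the labels on `S`: a factor `W` that ignores them can be kept, with these
labels pinned to `0`. -/
lemma sum_eq_sum_pinned (S : Finset (Fin N)) (W G : (Fin N → Fin 2) → ℝ)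
    (hW : ∀ Y Y' : Fin N → Fin 2, (∀ k ∉ S, Y k = Y' k) → W Y = W Y') :
    ∑ Y, W Y * G Y =
      ∑ Y : Fin N → Fin 2, W Y * ((∏ k ∈ S, if Y k = 0 then (1 : ℝ) else 0) *
        ∑ u ∈ assignments S, G (S.piecewise u Y)) := by
  have hpin : ∀ Y : Fin N → Fin 2, (∏ k ∈ S, if Y k = 0 then (1 : ℝ) else 0) =
      if Y ∈ assignments Sᶜ then 1 else 0 := by
    intro Y
    rw [Finset.prod_ite_zero]
    simp [mem_assignments]
  have hR : ∀ Y : Fin N → Fin 2, W Y * ((∏ k ∈ S, if Y k = 0 then (1 : ℝ) else 0) *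
        ∑ u ∈ assignments S, G (S.piecewise u Y)) =
      if Y ∈ assignments Sᶜ then ∑ u ∈ assignments S, W Y * G (S.piecewise u Y) else 0 := by
    intro Y
    rw [hpin]
    split_ifs <;> simp [Finset.mul_sum]
  rw [Finset.sum_congr rfl fun Y _ => hR Y, Finset.sum_ite_mem, Finset.univ_inter,
    ← Finset.sum_product']
  refine Finset.sum_nbij' (fun Y => (S.piecewise 0 Y, S.piecewise Y 0))
    (fun p => S.piecewise p.2 p.1) ?_ ?_ ?_ ?_ ?_
  · intro Y _
    simp +contextual [mem_assignments]
  · simp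
  · intro Y _
    ext k
    by_cases hk : k ∈ S <;> simp [hk]
  · rintro ⟨A, u⟩ h
    simp only [Finset.mem_product, mem_assignments, Finset.mem_compl, not_not] at h
    ext k <;> by_cases hk : k ∈ S <;> simp [hk, h.1, h.2]
  · intro Y _
    have h1 : S.piecewise (S.piecewise Y 0) (S.piecewise 0 Y) = Y := by
      ext k
      by_cases hk : k ∈ S <;> simp [hk]
    simp only [h1]
    rw [hW Y (S.piecewise 0 Y)]
    intro k hk
    simp [hk]

/-! ### Independence of the node -/

/-- The normalizing constants of a node and of its child agree: the labels of the node and of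
its siblings together are the labels of all parents of the child. -/
lemma nodeSum_eq_child (T : RevTree N) (ρ : ℝ) (px fi fo gi go : Fin N → Fin 2 → ℝ)
    (hfiInt : ∀ n, ¬ T.IsLeaf n → ∀ y : Fin 2,
      fi n y = ∑ u ∈ assignments (T.parents n),
        transProb ρ (y : ℕ) (∏ k ∈ T.parents n, (u k : ℕ)) *
          ∏ k ∈ T.parents n, fo k (u k))
    (hfo : ∀ n y, fo n y = fi n y * px n y)
    (hgiInt : ∀ n c, T.child n = some c → ∀ y : Fin 2,
      gi n y = ∑ yc : Fin 2, ∑ u ∈ assignments (T.siblings n c),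
        go c yc * transProb ρ (yc : ℕ) ((y : ℕ) * ∏ k ∈ T.siblings n c, (u k : ℕ)) *
          ∏ k ∈ T.siblings n c, fo k (u k))
    (hgo : ∀ n y, go n y = gi n y * px n y) {n c : Fin N} (hc : T.child n = some c) :
    ∑ y : Fin 2, fi n y * gi n y * px n y = ∑ y : Fin 2, fi c y * gi c y * px c y := by
  have hn : n ∈ T.parents c := T.mem_parents.2 hc
  have hleaf : ¬ T.IsLeaf c := fun h => by
    rw [RevTree.IsLeaf] at h
    simp [h] at hn
  have hL : ∀ y, fi n y * gi n y * px n y =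
      ∑ yc : Fin 2, ∑ u ∈ assignments (T.siblings n c),
        fo n y * (go c yc *
          transProb ρ (yc : ℕ) ((y : ℕ) * ∏ k ∈ T.siblings n c, (u k : ℕ)) *
          ∏ k ∈ T.siblings n c, fo k (u k)) := by
    intro y
    have : fi n y * gi n y * px n y = fo n y * gi n y := by rw [hfo]; ring
    rw [this, hgiInt n c hc y, Finset.mul_sum]
    simp only [Finset.mul_sum]
  rw [Finset.sum_congr rfl fun y _ => hL y, Finset.sum_comm]
  refine Finset.sum_congr rfl fun yc _ => ?_
  have hR : fi c yc * gi c yc * px c yc = go c yc * fi c yc := by rw [hgo]; ring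
  rw [hR, hfiInt c hleaf, sum_assignments_split hn, Finset.mul_sum]
  refine Finset.sum_congr rfl fun y _ => ?_
  rw [Finset.mul_sum]
  refine Finset.sum_congr rfl fun u _ => ?_
  have hne : ∀ k ∈ T.parents c \ {n}, k ≠ n := by
    intro k hk h
    simp [h] at hk
  have h1 : ∏ k ∈ T.parents c, ((Function.update u n y k : Fin 2) : ℕ) =
      (y : ℕ) * ∏ k ∈ T.siblings n c, (u k : ℕ) := by
    rw [Finset.prod_eq_mul_prod_sdiff_singleton_of_mem hn, Function.update_self, RevTree.siblings]
    congr 1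
    exact Finset.prod_congr rfl fun k hk => by rw [Function.update_of_ne (hne k hk)]
  have h2 : ∏ k ∈ T.parents c, fo k (Function.update u n y k) =
      fo n y * ∏ k ∈ T.siblings n c, fo k (u k) := by
    rw [Finset.prod_eq_mul_prod_sdiff_singleton_of_mem hn, Function.update_self, RevTree.siblings]
    congr 1
    exact Finset.prod_congr rfl fun k hk => by rw [Function.update_of_ne (hne k hk)]
  rw [h1, h2]
  ring

/-! ### Summing out labels from the leaves to the root -/

/-- The factor of node `m` once the nodes of `D` have been processed: its original factor if
`m ∉ D`, its outgoing message if `m` has no child in `D`, and otherwise the indicator that its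
label, which has been summed out, is pinned to `0`. -/
noncomputable def partialFactor (T : RevTree N) (π ρ : ℝ) (px fo : Fin N → Fin 2 → ℝ)
    (D : Finset (Fin N)) (Y : Fin N → Fin 2) (m : Fin N) : ℝ :=
  if m ∉ D then px m (Y m) * nodeFactor T π ρ Y m
  else if ∀ c ∈ D, T.child m ≠ some c then fo m (Y m)
  else if Y m = 0 then 1 else 0

/-- The sum over all labelings once the nodes of `D` have been processed. -/
noncomputable def partialSum (T : RevTree N) (π ρ : ℝ) (px fo : Fin N → Fin 2 → ℝ)
    (D : Finset (Fin N)) : ℝ :=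
  ∑ Y : Fin N → Fin 2, ∏ m, partialFactor T π ρ px fo D Y m

lemma nodeFactor_congr (T : RevTree N) (π ρ : ℝ) {Y Y' : Fin N → Fin 2} {m : Fin N}
    (hm : Y m = Y' m) (h : ∀ k ∈ T.parents m, Y k = Y' k) :
    nodeFactor T π ρ Y m = nodeFactor T π ρ Y' m := by
  unfold nodeFactor
  rw [hm, Finset.prod_congr rfl fun k hk => by rw [h k hk]]

/-- Processing a node `m` whose parents are all processed: the parents' labels occur only in the
factor of `m` and in the parents' own messages, so summing them out yields `fi m`. -/
lemma partialSum_insert (T : RevTree N) (π ρ : ℝ) (px fi fo : Fin N → Fin 2 → ℝ)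
    (hfiLeaf : ∀ n, T.IsLeaf n → ∀ y : Fin 2, fi n y = leafPrior π y)
    (hfiInt : ∀ n, ¬ T.IsLeaf n → ∀ y : Fin 2,
      fi n y = ∑ u ∈ assignments (T.parents n),
        transProb ρ (y : ℕ) (∏ k ∈ T.parents n, (u k : ℕ)) *
          ∏ k ∈ T.parents n, fo k (u k))
    (hfo : ∀ n y, fo n y = fi n y * px n y)
    {D : Finset (Fin N)} (hD : ∀ m ∈ D, T.parents m ⊆ D) {m : Fin N} (hm : m ∉ D)
    (hmD : T.parents m ⊆ D) :
    partialSum T π ρ px fo D = partialSum T π ρ px fo (insert m D) := by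
  set P := T.parents m with hP
  have hmP : m ∉ P := T.not_mem_parents_self m
  -- The three kinds of nodes: `m` itself, the parents of `m`, and the rest.
  have split : ∀ F : Fin N → ℝ,
      ∏ k, F k = (∏ k ∈ (insert m P)ᶜ, F k) * (F m * ∏ k ∈ P, F k) := by
    intro F
    rw [← Finset.prod_insert hmP, mul_comm, Finset.prod_mul_prod_compl]
  have hrest : ∀ Y, ∀ k ∈ (insert m P)ᶜ,
      partialFactor T π ρ px fo (insert m D) Y k = partialFactor T π ρ px fo D Y k := by
    intro Y k hk
    simp only [Finset.mem_compl, Finset.mem_insert, not_or] at hk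
    have hkm : T.child k ≠ some m := fun h => hk.2 (T.mem_parents.2 h)
    simp [partialFactor, Finset.mem_insert, hk.1, hkm]
  have hm1 : ∀ Y, partialFactor T π ρ px fo D Y m = px m (Y m) * nodeFactor T π ρ Y m := by
    intro Y
    simp [partialFactor, hm]
  have hm2 : ∀ Y, partialFactor T π ρ px fo (insert m D) Y m = fo m (Y m) := by
    intro Y
    have h : ∀ c ∈ insert m D, T.child m ≠ some c := by
      intro c hc h
      rcases Finset.mem_insert.1 hc with rfl | hc
      · exact hmP (T.mem_parents.2 h)
      · exact hm (hD c hc (T.mem_parents.2 h))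
    rw [partialFactor, if_neg (by simp), if_pos h]
  have hP1 : ∀ Y, ∀ k ∈ P, partialFactor T π ρ px fo D Y k = fo k (Y k) := by
    intro Y k hk
    have h : ∀ c ∈ D, T.child k ≠ some c := by
      intro c hc h
      rw [T.mem_parents.1 hk, Option.some_inj] at h
      exact hm (h ▸ hc)
    rw [partialFactor, if_neg (by simpa using hmD hk), if_pos h]
  have hP2 : ∀ Y, ∀ k ∈ P, partialFactor T π ρ px fo (insert m D) Y k =
      if Y k = 0 then 1 else 0 := by
    intro Y k hk
    have h : ¬ ∀ c ∈ insert m D, T.child k ≠ some c := fun h =>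
      h m (Finset.mem_insert_self _ _) (T.mem_parents.1 hk)
    rw [partialFactor, if_neg (by simpa using fun _ => hmD hk), if_neg h]
  -- The recursion for `fi`, uniformly for leaves and internal nodes.
  have hfi : ∀ Y : Fin N → Fin 2, ∑ u ∈ assignments P,
      nodeFactor T π ρ (P.piecewise u Y) m * ∏ k ∈ P, fo k (u k) = fi m (Y m) := by
    intro Y
    by_cases hl : T.IsLeaf m
    · have hP0 : P = ∅ := hl
      have hA : assignments (∅ : Finset (Fin N)) = {0} := by
        ext u
        simp [mem_assignments, funext_iff]
      simp [hP0, hA, nodeFactor, hl, hfiLeaf]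
    · rw [hfiInt m hl]
      refine Finset.sum_congr rfl fun u _ => ?_
      rw [nodeFactor, if_neg hl, Finset.piecewise_eq_of_notMem _ _ _ hmP]
      congr 2
      exact Finset.prod_congr rfl fun k hk => by rw [Finset.piecewise_eq_of_mem _ _ _ hk]
  have hW : ∀ Y Y' : Fin N → Fin 2, (∀ k ∉ P, Y k = Y' k) →
      ∏ k ∈ (insert m P)ᶜ, partialFactor T π ρ px fo D Y k =
        ∏ k ∈ (insert m P)ᶜ, partialFactor T π ρ px fo D Y' k := by
    intro Y Y' h
    refine Finset.prod_congr rfl fun k hk => ?_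
    simp only [Finset.mem_compl, Finset.mem_insert, not_or] at hk
    have hnf : nodeFactor T π ρ Y k = nodeFactor T π ρ Y' k := by
      refine nodeFactor_congr T π ρ (h k hk.2) fun j hj => h j fun hjP => hk.1 ?_
      -- a node has only one child, so a parent of `k` is not a parent of `m`
      have h1 := T.mem_parents.1 hj
      rw [T.mem_parents.1 hjP, Option.some_inj] at h1
      exact h1.symm
    rw [partialFactor, partialFactor, hnf, h k hk.2]
  have hL : ∀ Y, ∏ k, partialFactor T π ρ px fo D Y k =
      (∏ k ∈ (insert m P)ᶜ, partialFactor T π ρ px fo D Y k) *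
        (px m (Y m) * nodeFactor T π ρ Y m * ∏ k ∈ P, fo k (Y k)) := by
    intro Y
    rw [split, hm1, Finset.prod_congr rfl (hP1 Y)]
  have hR : ∀ Y, ∏ k, partialFactor T π ρ px fo (insert m D) Y k =
      (∏ k ∈ (insert m P)ᶜ, partialFactor T π ρ px fo D Y k) *
        (fo m (Y m) * ∏ k ∈ P, if Y k = 0 then (1 : ℝ) else 0) := by
    intro Y
    rw [split, hm2, Finset.prod_congr rfl (hP2 Y), Finset.prod_congr rfl (hrest Y)]
  unfold partialSum
  simp only [hL, hR]
  rw [sum_eq_sum_pinned P _ _ hW]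
  refine Finset.sum_congr rfl fun Y _ => ?_
  rw [hfo, ← hfi Y, mul_comm (_ * px m (Y m)), Finset.sum_mul]
  congr 2
  refine Finset.sum_congr rfl fun u _ => ?_
  rw [Finset.piecewise_eq_of_notMem _ _ _ hmP,
    Finset.prod_congr rfl fun k hk => by rw [Finset.piecewise_eq_of_mem _ _ _ hk]]
  ring

/-- By acyclicity a proper parent-closed set always leaves out some node with all parents inside,
so `partialSum_insert` applies until every node has been processed. -/
lemma partialSum_eq_univ (T : RevTree N) (π ρ : ℝ) (px fi fo : Fin N → Fin 2 → ℝ)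
    (hfiLeaf : ∀ n, T.IsLeaf n → ∀ y : Fin 2, fi n y = leafPrior π y)
    (hfiInt : ∀ n, ¬ T.IsLeaf n → ∀ y : Fin 2,
      fi n y = ∑ u ∈ assignments (T.parents n),
        transProb ρ (y : ℕ) (∏ k ∈ T.parents n, (u k : ℕ)) *
          ∏ k ∈ T.parents n, fo k (u k))
    (hfo : ∀ n y, fo n y = fi n y * px n y)
    (D : Finset (Fin N)) (hD : ∀ m ∈ D, T.parents m ⊆ D) :
    partialSum T π ρ px fo D = partialSum T π ρ px fo Finset.univ := by
  induction hs : Dᶜ.card generalizing D with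
  | zero =>
    rw [Finset.card_eq_zero, Finset.compl_eq_empty_iff] at hs
    rw [hs]
  | succ s ih =>
    have hne : ∃ m, m ∈ {m | m ∉ D} := by
      obtain ⟨m, hm⟩ := Finset.card_pos.1 (by omega : 0 < Dᶜ.card)
      exact ⟨m, by simpa using hm⟩
    obtain ⟨m, hm, hmin⟩ := T.wf_parent.has_min _ hne
    have hmD : T.parents m ⊆ D := by
      intro k hk
      by_contra hkD
      exact hmin k hkD (T.mem_parents.1 hk)
    rw [partialSum_insert T π ρ px fi fo hfiLeaf hfiInt hfo hD hm hmD]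
    refine ih _ ?_ ?_
    · intro k hk
      rcases Finset.mem_insert.1 hk with rfl | hk
      · exact hmD.trans (Finset.subset_insert _ _)
      · exact (hD k hk).trans (Finset.subset_insert _ _)
    · rw [Finset.compl_insert, Finset.card_erase_of_mem (by simpa using hm), hs]
      rfl

/-- With all nodes processed only the root's label is left free. -/
lemma partialSum_univ (T : RevTree N) (π ρ : ℝ) (px fo : Fin N → Fin 2 → ℝ) :
    partialSum T π ρ px fo Finset.univ = ∑ y, fo T.root y := by
  have h : ∀ Y m, partialFactor T π ρ px fo Finset.univ Y m =
      if m = T.root then fo m (Y m) else if Y m = 0 then 1 else 0 := by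
    intro Y m
    have hiff : (∀ c, T.child m ≠ some c) ↔ m = T.root := by
      rw [← Option.eq_none_iff_forall_ne_some]
      exact ⟨T.root_unique m, fun h => h ▸ T.child_root⟩
    simp [partialFactor, ← hiff]
  unfold partialSum
  simp only [h]
  have := Finset.prod_univ_sum (fun _ : Fin N => (Finset.univ : Finset (Fin 2)))
    (fun m y => if m = T.root then fo m y else if y = 0 then (1 : ℝ) else 0)
  rw [Fintype.piFinset_univ] at this
  rw [← this, Finset.prod_eq_single T.root]
  · simp
  · intro m _ hm
    simp [hm]
  · simp

end

/-- the normalizing constant of the unnormalized node marginal is the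
data likelihood `P(X)` and is the same for every node `n`. -/
theorem normalizing_constant_eq_data_likelihood
{N : ℕ} (T : RevTree N) (π ρ : ℝ)
    (hπ : π ∈ Set.Ioo (0 : ℝ) 1) (hρ : ρ ∈ Set.Ioo (0 : ℝ) 1)
    (px : Fin N → Fin 2 → ℝ) (hpx : ∀ n y, 0 ≤ px n y)
(fi fo : Fin N → Fin 2 → ℝ)
    (hfiLeaf : ∀ n, T.IsLeaf n → ∀ y : Fin 2, fi n y = leafPrior π y)
    (hfiInt : ∀ n, ¬ T.IsLeaf n → ∀ y : Fin 2,
      fi n y = ∑ u ∈ assignments (T.parents n),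
        transProb ρ (y : ℕ) (∏ k ∈ T.parents n, (u k : ℕ)) *
          ∏ k ∈ T.parents n, fo k (u k))
    (hfo : ∀ n y, fo n y = fi n y * px n y)
(gi go : Fin N → Fin 2 → ℝ)
    (hgiRoot : ∀ y : Fin 2, gi T.root y = 1)
    (hgiInt : ∀ n c, T.child n = some c → ∀ y : Fin 2,
      gi n y = ∑ yc : Fin 2, ∑ u ∈ assignments (T.siblings n c),
        go c yc * transProb ρ (yc : ℕ) ((y : ℕ) * ∏ k ∈ T.siblings n c, (u k : ℕ)) *
          ∏ k ∈ T.siblings n c, fo k (u k))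
    (hgo : ∀ n y, go n y = gi n y * px n y) :
    ∀ n : Fin N,
      ∑ y : Fin 2, fi n y * gi n y * px n y =
        ∑ Y : Fin N → Fin 2,
          (∏ m, px m (Y m)) * ∏ m, nodeFactor T π ρ Y m := by
  intro n
  induction n using T.wf_child.induction with
  | _ n ih =>
    cases hc : T.child n with
    | some c =>
      rw [nodeSum_eq_child T ρ px fi fo gi go hfiInt hfo hgiInt hgo hc]
      exact ih c hc
    | none =>
      obtain rfl := T.root_unique n hc
      have h := partialSum_eq_univ T π ρ px fi fo hfiLeaf hfiInt hfo ∅ (by simp)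
      rw [partialSum_univ] at h
      simp only [hgiRoot, mul_one, ← hfo]
      rw [← h]
      simp [partialSum, partialFactor, Finset.prod_mul_distrib]
end
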